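/- Let A ∈ ℝ^{m×n} with m ≤ n and A ≠ 0, with largest and smallest singular values σ₁ and σ_m, let k be a positive integer with 3k ≤ n, and let δ ∈ (0,1) be a restricted isometry constant of order 3k for A with δ < 1/√3. Let ε > max{σ₁², ((σ₁² − σ_m²)/(1/√3 − δ) − 1)σ₁²} and let λ satisfy ε + σ₁² − (1/√3 − δ)(ε + σ₁²)/σ₁² < λ ≤ ε + σ_m². Let x ∈ ℝ^n be k-sparse and y = Ax. If (x^p)_{p≥0} is a sequence in ℝ^n such that x^0 is k-sparse and, for every p ≥ 0, x^{p+1} is a hard k-thresholding of x^p + λ(AᵀA + εI)^{−1}Aᵀ(y − Ax^p), then x^p converges to x as p → ∞. -/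

import Mathlib

/-!
Write `M = AᵀA`, `N = M + ε`, `e = xᵖ - x`. The vector that is thresholded is `x + G e` with the
symmetric matrix `G = 1 - λ N⁻¹ M`, and the iteration contracts for three reasons.

* Thresholding costs at most a factor `√3`: if `X` contains the support of `x` and `S` is the
  selected index set, then `‖w - x‖² ≤ 3 ‖(z - x)_{S ∪ X}‖²` (`threshold_bound`).
* On `3k`-sparse vectors `|⟨u, G u⟩| ≤ (δ + τ) ‖u‖²` with `τ = σ₁² (1 - λ / (σ₁² + ε))`. Indeed
  `G = (1 - M) + (M - λ N⁻¹ M)`; the first part is controlled by restricted isometry, and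
  `0 ≤ M - λ N⁻¹ M ≤ τ` as quadratic forms (`quad_bounds`). The bounds on the second part follow by
  substituting `u = N v` and expressing everything through `a = A v`, `Aᵀ a` and `A Aᵀ a`.
* Polarization (`polar`) turns the bound on the quadratic form into
  `⟨u, G e⟩ ≤ (δ + τ) ‖u‖ ‖e‖`; taking for `u` the restriction of `G e` to `S ∪ X` gives
  `‖(G e)_{S ∪ X}‖ ≤ (δ + τ) ‖e‖`.

The lower bound on `λ` says exactly that `δ + τ < 1/√3`, so the error decays geometrically.
-/

open Matrix Filter Topology

/-- Euclidean (ℓ₂) norm of a vector in ℝ^n. -/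
noncomputable def norm2 {n : ℕ} (x : Fin n → ℝ) : ℝ := Real.sqrt (∑ i, x i ^ 2)

/-- Euclidean inner product. -/
def dot {n : ℕ} (u v : Fin n → ℝ) : ℝ := ∑ i, u i * v i

/-- Support of a vector. -/
def supp {n : ℕ} (x : Fin n → ℝ) : Set (Fin n) := {i | x i ≠ 0}

/-- δ ∈ (0,1) is a restricted isometry constant of order q for A. -/
def IsRIC {m n : ℕ} (A : Matrix (Fin m) (Fin n) ℝ) (q : ℕ) (δ : ℝ) : Prop :=
  0 < δ ∧ δ < 1 ∧
    ∀ x : Fin n → ℝ, (supp x).ncard ≤ q →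
      (1 - δ) * norm2 x ^ 2 ≤ norm2 (A.mulVec x) ^ 2 ∧
      norm2 (A.mulVec x) ^ 2 ≤ (1 + δ) * norm2 x ^ 2

/-- σ is the largest singular value (spectral norm) of A: it bounds ‖Av‖₂/‖v‖₂
and this bound is attained. -/
def IsMaxSingularValue {m n : ℕ} (A : Matrix (Fin m) (Fin n) ℝ) (σ : ℝ) : Prop :=
  0 ≤ σ ∧ (∀ v : Fin n → ℝ, norm2 (A.mulVec v) ≤ σ * norm2 v) ∧
    ∃ v : Fin n → ℝ, v ≠ 0 ∧ norm2 (A.mulVec v) = σ * norm2 v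

/-- For m ≤ n, σ is the smallest singular value of A, i.e. σ² is the smallest
eigenvalue of A Aᵀ: σ is the infimum of ‖Aᵀu‖₂/‖u‖₂ and it is attained. -/
def IsMinSingularValue {m n : ℕ} (A : Matrix (Fin m) (Fin n) ℝ) (σ : ℝ) : Prop :=
  0 ≤ σ ∧ (∀ u : Fin m → ℝ, σ * norm2 u ≤ norm2 (Aᵀ.mulVec u)) ∧
    ∃ u : Fin m → ℝ, u ≠ 0 ∧ norm2 (Aᵀ.mulVec u) = σ * norm2 u

/-- w is a hard k-thresholding of z with associated index set S*. -/
def IsHardThresholding {n : ℕ} (k : ℕ) (z w : Fin n → ℝ) (S : Set (Fin n)) : Prop :=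
  S.ncard = k ∧ (∀ i ∈ S, w i = z i) ∧ (∀ i ∉ S, w i = 0) ∧
    ∀ i ∈ S, ∀ j ∉ S, |z j| ≤ |z i|

lemma norm2_sq {n : ℕ} (x : Fin n → ℝ) : norm2 x ^ 2 = x ⬝ᵥ x := by
  unfold norm2
  rw [Real.sq_sqrt (Finset.sum_nonneg fun i _ => sq_nonneg _)]
  simp [dotProduct, pow_two]

lemma norm2_nonneg {n : ℕ} (x : Fin n → ℝ) : 0 ≤ norm2 x := Real.sqrt_nonneg _

lemma dot_self_nonneg {n : ℕ} (x : Fin n → ℝ) : 0 ≤ x ⬝ᵥ x :=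
  norm2_sq x ▸ sq_nonneg _

lemma dot_cauchy {n : ℕ} (u v : Fin n → ℝ) : (u ⬝ᵥ v) ^ 2 ≤ (u ⬝ᵥ u) * (v ⬝ᵥ v) := by
  simpa [dotProduct, pow_two] using Finset.sum_mul_sq_le_sq_mul_sq Finset.univ u v

lemma dot_mulVec_transpose {m n : ℕ} (A : Matrix (Fin m) (Fin n) ℝ) (u : Fin n → ℝ)
    (v : Fin m → ℝ) : u ⬝ᵥ Aᵀ *ᵥ v = A *ᵥ u ⬝ᵥ v := by
  rw [dotProduct_mulVec, vecMul_transpose]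

/-- Polarization: a symmetric form bounded by `ρ ‖·‖²` on the span of `u` and `e` is bounded by
`ρ ‖u‖ ‖e‖` on the pair `(u, e)`. -/
lemma polar {n : ℕ} (G : Matrix (Fin n) (Fin n) ℝ) (hG : Gᵀ = G) (ρ : ℝ) (u e : Fin n → ℝ)
    (h : ∀ a b : ℝ, |(a • u + b • e) ⬝ᵥ G *ᵥ (a • u + b • e)|
      ≤ ρ * ((a • u + b • e) ⬝ᵥ (a • u + b • e))) :
    u ⬝ᵥ G *ᵥ e ≤ ρ * (norm2 u * norm2 e) := by
  have hsymm : e ⬝ᵥ G *ᵥ u = u ⬝ᵥ G *ᵥ e := by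
    conv_lhs => rw [← hG, dot_mulVec_transpose, dotProduct_comm]
  -- The scalars `‖e‖` and `±‖u‖` give both summands the same length.
  have h1 := (abs_le.mp (h (norm2 e) (norm2 u))).2
  have h2 := (abs_le.mp (h (norm2 e) (-norm2 u))).1
  have hu := norm2_sq u
  have he := norm2_sq e
  have hue : e ⬝ᵥ u = u ⬝ᵥ e := dotProduct_comm _ _
  simp only [mulVec_add, mulVec_smul, add_dotProduct, dotProduct_add, smul_dotProduct,
    dotProduct_smul, smul_eq_mul, hsymm, hue, ← hu, ← he] at h1 h2
  have key : 4 * (norm2 u * norm2 e) * (u ⬝ᵥ G *ᵥ e)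
      ≤ 4 * (norm2 u * norm2 e) * (ρ * (norm2 u * norm2 e)) := by nlinarith
  rcases (mul_nonneg (norm2_nonneg u) (norm2_nonneg e)).eq_or_lt with h0 | h0
  · rcases mul_eq_zero.mp h0.symm with h' | h'
    · have : u = 0 := dotProduct_self_eq_zero.mp (by rw [← hu, h']; ring)
      rw [← h0]
      simp [this]
    · have : e = 0 := dotProduct_self_eq_zero.mp (by rw [← he, h']; ring)
      rw [← h0]
      simp [this]
  · exact le_of_mul_le_mul_left key (by positivity)

/-- With `s = σ₁²` and `t = σ_m²`, the form `M - λ N⁻¹ M` lies between `0` and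
`s (1 - λ / (s + ε))`. -/
lemma quad_bounds {m n : ℕ} (A : Matrix (Fin m) (Fin n) ℝ) (N : Matrix (Fin n) (Fin n) ℝ)
    (s t ε lam : ℝ) (hN : N = Aᵀ * A + ε • 1) (hNu : N * N⁻¹ = 1)
    (ht0 : 0 ≤ t) (hε : 0 < ε) (hlam0 : 0 ≤ lam) (hlam : lam ≤ ε + t) (hts : t ≤ s)
    (hs : ∀ v, A *ᵥ v ⬝ᵥ A *ᵥ v ≤ s * (v ⬝ᵥ v))
    (ht : ∀ a, t * (a ⬝ᵥ a) ≤ Aᵀ *ᵥ a ⬝ᵥ Aᵀ *ᵥ a) (u : Fin n → ℝ) :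
    0 ≤ A *ᵥ u ⬝ᵥ A *ᵥ u - lam * (u ⬝ᵥ N⁻¹ *ᵥ (Aᵀ *ᵥ (A *ᵥ u))) ∧
    A *ᵥ u ⬝ᵥ A *ᵥ u - lam * (u ⬝ᵥ N⁻¹ *ᵥ (Aᵀ *ᵥ (A *ᵥ u)))
      ≤ s * (1 - lam / (s + ε)) * (u ⬝ᵥ u) := by
  have hNu' : N⁻¹ * N = 1 := mul_eq_one_comm.mp hNu
  have hNv : ∀ v, N *ᵥ v = Aᵀ *ᵥ (A *ᵥ v) + ε • v := by
    intro v
    rw [hN, add_mulVec, smul_mulVec, one_mulVec, mulVec_mulVec]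
  obtain ⟨v, hv⟩ : ∃ v, v = N⁻¹ *ᵥ u := ⟨_, rfl⟩
  have huv : u = Aᵀ *ᵥ (A *ᵥ v) + ε • v := by
    rw [← hNv, hv, mulVec_mulVec, hNu, one_mulVec]
  obtain ⟨a, ha⟩ : ∃ a, a = A *ᵥ v := ⟨_, rfl⟩
  rw [← ha] at huv
  have hAu : A *ᵥ u = A *ᵥ (Aᵀ *ᵥ a) + ε • a := by
    rw [huv, mulVec_add, mulVec_smul, ha]
  -- `N⁻¹` commutes with `M`, so it cancels against `u = N v`.
  have hB : N⁻¹ *ᵥ (Aᵀ *ᵥ (A *ᵥ u)) = Aᵀ *ᵥ a := by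
    have : Aᵀ *ᵥ (A *ᵥ u) = N *ᵥ (Aᵀ *ᵥ a) := by
      rw [hNv, hAu, mulVec_add, mulVec_smul]
    rw [this, mulVec_mulVec, hNu', one_mulVec]
  have hKa : A *ᵥ (Aᵀ *ᵥ a) ⬝ᵥ a = Aᵀ *ᵥ a ⬝ᵥ Aᵀ *ᵥ a := (dot_mulVec_transpose A _ a).symm
  have hKa' : a ⬝ᵥ A *ᵥ (Aᵀ *ᵥ a) = Aᵀ *ᵥ a ⬝ᵥ Aᵀ *ᵥ a := by rw [dotProduct_comm, hKa]
  have hva : v ⬝ᵥ Aᵀ *ᵥ a = a ⬝ᵥ a := by rw [dot_mulVec_transpose, ← ha]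
  have hform : u ⬝ᵥ N⁻¹ *ᵥ (Aᵀ *ᵥ (A *ᵥ u)) = Aᵀ *ᵥ a ⬝ᵥ Aᵀ *ᵥ a + ε * (a ⬝ᵥ a) := by
    rw [hB]
    conv_lhs => rw [huv]
    rw [add_dotProduct, smul_dotProduct, hva, smul_eq_mul]
  have hAA : A *ᵥ u ⬝ᵥ A *ᵥ u = A *ᵥ (Aᵀ *ᵥ a) ⬝ᵥ A *ᵥ (Aᵀ *ᵥ a)
      + 2 * ε * (Aᵀ *ᵥ a ⬝ᵥ Aᵀ *ᵥ a) + ε ^ 2 * (a ⬝ᵥ a) := by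
    rw [hAu]
    simp only [add_dotProduct, dotProduct_add, smul_dotProduct, dotProduct_smul, smul_eq_mul,
      hKa, hKa']
    ring
  have f1 := ht a
  have f2 := hs (Aᵀ *ᵥ a)
  have f3 := dot_cauchy a (A *ᵥ (Aᵀ *ᵥ a))
  rw [hKa'] at f3
  have hr := dot_self_nonneg a
  have hq := dot_self_nonneg (Aᵀ *ᵥ a)
  have hH := dot_self_nonneg (A *ᵥ (Aᵀ *ᵥ a))
  have hsu := hs u
  rw [hform]
  rw [hAA] at hsu ⊢
  generalize a ⬝ᵥ a = r at *
  generalize Aᵀ *ᵥ a ⬝ᵥ Aᵀ *ᵥ a = q at *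
  generalize A *ᵥ (Aᵀ *ᵥ a) ⬝ᵥ A *ᵥ (Aᵀ *ᵥ a) = H at *
  generalize u ⬝ᵥ u = w at *
  have hs0 : 0 ≤ s := ht0.trans hts
  have g1 : t * q ≤ H := by
    rcases hq.eq_or_lt with h | h
    · rw [← h]; simpa using hH
    · have : 0 < r := by
        by_contra hr'
        have : r = 0 := by linarith
        rw [this] at f3
        nlinarith
      have : t * q * r ≤ H * r := by nlinarith
      exact le_of_mul_le_mul_right this ‹0 < r›
  have g2 : q ≤ s * r := by
    rcases hq.eq_or_lt with h | h
    · rw [← h]; positivity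
    · have : q * q ≤ (s * r) * q := by nlinarith
      exact le_of_mul_le_mul_right this h
  constructor
  · have : lam * (q + ε * r) ≤ (ε + t) * (q + ε * r) :=
      mul_le_mul_of_nonneg_right hlam (by positivity)
    nlinarith [mul_nonneg hε.le (sub_nonneg.mpr f1)]
  · have hsε : 0 < s + ε := by linarith
    have g3 : (H + 2 * ε * q + ε ^ 2 * r) ≤ (s + ε) * (q + ε * r) := by
      nlinarith [mul_nonneg hε.le (sub_nonneg.mpr g2)]
    have g4 : lam / (s + ε) * (H + 2 * ε * q + ε ^ 2 * r) ≤ lam * (q + ε * r) := by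
      have := mul_le_mul_of_nonneg_left g3 (div_nonneg hlam0 hsε.le)
      rwa [← mul_assoc (lam / (s + ε)), div_mul_cancel₀ _ hsε.ne'] at this
    have hc : 0 ≤ 1 - lam / (s + ε) := by
      rw [sub_nonneg, div_le_one hsε]; linarith
    have := mul_le_mul_of_nonneg_left hsu hc
    linarith

/-- If `S` holds the largest entries of `z` and `|X| ≤ |S|`, then `z` has no more energy on `X \ S`
than on `S \ X`: inject `X \ S` into `S \ X`, which does not decrease any entry. -/
lemma energy_swap {n : ℕ} (z : Fin n → ℝ) (S X : Finset (Fin n)) (hc : X.card ≤ S.card)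
    (hz : ∀ i ∈ S, ∀ j ∉ S, |z j| ≤ |z i|) :
    ∑ j ∈ X \ S, z j ^ 2 ≤ ∑ i ∈ S \ X, z i ^ 2 := by
  have hcard : (X \ S).card ≤ (S \ X).card := by
    have h1 := Finset.card_sdiff_add_card_inter X S
    have h2 := Finset.card_sdiff_add_card_inter S X
    rw [Finset.inter_comm] at h2
    omega
  obtain ⟨f, hf⟩ : ∃ f : ↥(X \ S) → ↥(S \ X), Function.Injective f := by
    have : Nonempty (↥(X \ S) ↪ ↥(S \ X)) := by
      rw [Function.Embedding.nonempty_iff_card_le]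
      rwa [Fintype.card_coe, Fintype.card_coe]
    exact ⟨this.some, this.some.injective⟩
  rw [← Finset.sum_coe_sort (X \ S), ← Finset.sum_coe_sort (S \ X)]
  calc ∑ j : ↥(X \ S), z j ^ 2 ≤ ∑ j : ↥(X \ S), z (f j) ^ 2 := by
        refine Finset.sum_le_sum fun j _ => ?_
        exact sq_le_sq.mpr (hz _ (Finset.mem_sdiff.mp (f j).2).1 _ (Finset.mem_sdiff.mp j.2).2)
    _ = ∑ i ∈ Finset.univ.image f, z i ^ 2 := by
        rw [Finset.sum_image fun a _ b _ h => hf h]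
    _ ≤ ∑ i : ↥(S \ X), z i ^ 2 :=
        Finset.sum_le_sum_of_subset_of_nonneg (Finset.subset_univ _) fun _ _ _ => sq_nonneg _

/-- Thresholding loses at most a factor `√3`. On `X \ S` the error is `x`, which is split as
`x = (x - z) + z`, and the energy of `z` there is moved to `S \ X`, where `z = z - x`. -/
lemma threshold_bound {n : ℕ} (z w x : Fin n → ℝ) (S X : Finset (Fin n)) (hc : X.card ≤ S.card)
    (hz : ∀ i ∈ S, ∀ j ∉ S, |z j| ≤ |z i|) (hw1 : ∀ i ∈ S, w i = z i) (hw0 : ∀ i ∉ S, w i = 0)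
    (hx : ∀ i ∉ X, x i = 0) :
    (w - x) ⬝ᵥ (w - x) ≤ 3 * ∑ i ∈ S ∪ X, (z i - x i) ^ 2 := by
  have hsw := energy_swap z S X hc hz
  have h1 : (w - x) ⬝ᵥ (w - x) = ∑ i ∈ S ∪ X, (w i - x i) ^ 2 := by
    rw [dotProduct]
    symm
    rw [Finset.sum_subset (Finset.subset_univ (S ∪ X))]
    · simp [pow_two]
    · intro i _ hi
      simp only [Finset.mem_union, not_or] at hi
      simp [hw0 i hi.1, hx i hi.2]
  have hd : S ∪ X = S ∪ (X \ S) := by simp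
  have hdisj : Disjoint S (X \ S) := Finset.disjoint_sdiff
  rw [h1, hd, Finset.sum_union hdisj, Finset.sum_union hdisj]
  have e1 : ∑ i ∈ S, (w i - x i) ^ 2 = ∑ i ∈ S, (z i - x i) ^ 2 :=
    Finset.sum_congr rfl fun i hi => by rw [hw1 i hi]
  have e2 : ∑ i ∈ X \ S, (w i - x i) ^ 2
      ≤ 2 * ∑ i ∈ X \ S, (z i - x i) ^ 2 + 2 * ∑ i ∈ X \ S, z i ^ 2 := by
    rw [Finset.mul_sum, Finset.mul_sum, ← Finset.sum_add_distrib]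
    refine Finset.sum_le_sum fun i hi => ?_
    rw [hw0 i (Finset.mem_sdiff.mp hi).2]
    nlinarith [sq_nonneg (z i + (z i - x i))]
  have e3 : ∑ i ∈ S \ X, z i ^ 2 ≤ ∑ i ∈ S, (z i - x i) ^ 2 := by
    calc ∑ i ∈ S \ X, z i ^ 2 = ∑ i ∈ S \ X, (z i - x i) ^ 2 :=
          Finset.sum_congr rfl fun i hi => by rw [hx i (Finset.mem_sdiff.mp hi).2, sub_zero]
      _ ≤ _ := Finset.sum_le_sum_of_subset_of_nonneg Finset.sdiff_subset
          fun _ _ _ => sq_nonneg _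
  have e4 : 0 ≤ ∑ i ∈ X \ S, (z i - x i) ^ 2 := Finset.sum_nonneg fun _ _ => sq_nonneg _
  linarith

/-- One step of the iteration, for a symmetric `G` whose quadratic form is bounded by `ρ` on
`3k`-sparse vectors: with `u` the restriction of `z - x = G (xp - x)` to `S ∪ supp x`, one has
`‖u‖² = ⟨u, G (xp - x)⟩`, and `u`, `xp - x` have a common support of size at most `3k`. -/
lemma step_bound {n k : ℕ} (G : Matrix (Fin n) (Fin n) ℝ) (hG : Gᵀ = G) (ρ : ℝ) (hρ : 0 ≤ ρ)
    (hquad : ∀ u : Fin n → ℝ, (supp u).ncard ≤ 3 * k → |u ⬝ᵥ G *ᵥ u| ≤ ρ * (u ⬝ᵥ u))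
    (x xp z w : Fin n → ℝ) (hx : (supp x).ncard ≤ k) (hxp : (supp xp).ncard ≤ k)
    (hz : z - x = G *ᵥ (xp - x)) (S : Set (Fin n)) (hS : IsHardThresholding k z w S) :
    norm2 (w - x) ≤ Real.sqrt 3 * ρ * norm2 (xp - x) := by
  classical
  obtain ⟨hSk, hw1, hw0, hzz⟩ := hS
  let T : Finset (Fin n) := S.toFinset
  let X : Finset (Fin n) := (supp x).toFinset
  let Y : Finset (Fin n) := (supp xp).toFinset
  have hT : T.card = k := by rw [← hSk, Set.ncard_eq_toFinset_card']
  have hX : X.card ≤ k := by rwa [Set.ncard_eq_toFinset_card'] at hx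
  have hY : Y.card ≤ k := by rwa [Set.ncard_eq_toFinset_card'] at hxp
  have hx0 : ∀ i ∉ X, x i = 0 := fun i hi => by
    by_contra h
    exact hi (Set.mem_toFinset.mpr h)
  have hxp0 : ∀ i ∉ Y, xp i = 0 := fun i hi => by
    by_contra h
    exact hi (Set.mem_toFinset.mpr h)
  have htb := threshold_bound z w x T X (by omega) (by simpa [T] using hzz)
    (by simpa [T] using hw1) (by simpa [T] using hw0) hx0
  let u : Fin n → ℝ := fun i => if i ∈ T ∪ X then (z - x) i else 0
  have huz : u ⬝ᵥ (z - x) = u ⬝ᵥ u := by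
    refine Finset.sum_congr rfl fun i _ => ?_
    by_cases hi : i ∈ T ∪ X
    · simp only [u, if_pos hi]
    · simp only [u, if_neg hi, zero_mul]
  have huu : u ⬝ᵥ u = ∑ i ∈ T ∪ X, (z i - x i) ^ 2 := by
    rw [dotProduct, ← Finset.sum_subset (Finset.subset_univ (T ∪ X))]
    · exact Finset.sum_congr rfl fun i hi => by simp only [u, if_pos hi, Pi.sub_apply, pow_two]
    · intro i _ hi
      simp only [u, if_neg hi, mul_zero]
  have hcard : (T ∪ X ∪ Y).card ≤ 3 * k := by
    have h1 := Finset.card_union_le (T ∪ X) Y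
    have h2 := Finset.card_union_le T X
    omega
  have hpol := polar G hG ρ u (xp - x) (fun a b => hquad _ (by
    refine le_trans ?_ hcard
    rw [← Set.ncard_coe_finset]
    refine Set.ncard_le_ncard ?_ (Set.toFinite _)
    intro i hi
    by_contra hn
    apply hi
    simp only [Finset.coe_union, Set.mem_union, Finset.mem_coe, not_or] at hn
    simp [u, hn.1.1, hn.1.2, hx0 i hn.1.2, hxp0 i hn.2]))
  rw [← hz, huz, ← norm2_sq] at hpol
  have hu : norm2 u ≤ ρ * norm2 (xp - x) := by
    rcases (norm2_nonneg u).eq_or_lt with h | h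
    · rw [← h]; exact mul_nonneg hρ (norm2_nonneg _)
    · exact le_of_mul_le_mul_left (by linarith) h
  rw [← huu, ← norm2_sq, ← norm2_sq] at htb
  refine le_of_sq_le_sq ?_ (by have := norm2_nonneg (xp - x); positivity)
  rw [mul_assoc, mul_pow, Real.sq_sqrt (by norm_num)]
  have := pow_le_pow_left₀ (norm2_nonneg u) hu 2
  linarith

/-- Theorem 3.4: guaranteed success of NSIHT, noiseless case. -/
theorem stmt_6 {m n : ℕ} (hmn : m ≤ n) (A : Matrix (Fin m) (Fin n) ℝ) (hA : A ≠ 0)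
    (σ1 σm : ℝ) (hσ1 : IsMaxSingularValue A σ1) (hσm : IsMinSingularValue A σm)
    (k : ℕ) (hk : 0 < k) (hkn : 3 * k ≤ n)
    (δ : ℝ) (hδ : IsRIC A (3 * k) δ) (hδ3 : δ < 1 / Real.sqrt 3)
    (ε lam : ℝ)
    (hε : max (σ1 ^ 2) (((σ1 ^ 2 - σm ^ 2) / (1 / Real.sqrt 3 - δ) - 1) * σ1 ^ 2) < ε)
    (hlam1 : ε + σ1 ^ 2 - (1 / Real.sqrt 3 - δ) * (ε + σ1 ^ 2) / σ1 ^ 2 < lam)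
    (hlam2 : lam ≤ ε + σm ^ 2)
    (x : Fin n → ℝ) (hx : (supp x).ncard ≤ k) (y : Fin m → ℝ) (hy : y = A.mulVec x)
    (xs : ℕ → Fin n → ℝ) (hx0 : (supp (xs 0)).ncard ≤ k)
    (hiter : ∀ p : ℕ, ∃ S : Set (Fin n),
      IsHardThresholding k
        (xs p + lam • ((Aᵀ * A + ε • (1 : Matrix (Fin n) (Fin n) ℝ))⁻¹).mulVec
          (Aᵀ.mulVec (y - A.mulVec (xs p))))
        (xs (p + 1)) S) :
    Tendsto (fun p => norm2 (xs p - x)) atTop (𝓝 0) := by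
  have hs0 : 0 ≤ σ1 := hσ1.1
  have hε0 : 0 < ε := lt_of_le_of_lt (sq_nonneg σ1) (lt_of_le_of_lt (le_max_left _ _) hε)
  have hs : ∀ v, A *ᵥ v ⬝ᵥ A *ᵥ v ≤ σ1 ^ 2 * (v ⬝ᵥ v) := by
    intro v
    rw [← norm2_sq, ← norm2_sq, ← mul_pow]
    exact pow_le_pow_left₀ (norm2_nonneg _) (hσ1.2.1 v) 2
  have ht : ∀ a, σm ^ 2 * (a ⬝ᵥ a) ≤ Aᵀ *ᵥ a ⬝ᵥ Aᵀ *ᵥ a := by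
    intro a
    rw [← norm2_sq, ← norm2_sq, ← mul_pow]
    exact pow_le_pow_left₀ (mul_nonneg hσm.1 (norm2_nonneg _)) (hσm.2.1 a) 2
  have hts : σm ^ 2 ≤ σ1 ^ 2 := by
    obtain ⟨a, ha0, ha⟩ := hσm.2.2
    have hr : 0 < a ⬝ᵥ a := (dot_self_nonneg a).lt_of_ne
      fun h => ha0 (dotProduct_self_eq_zero.mp h.symm)
    have f1 := ht a
    have f2 := hs (Aᵀ *ᵥ a)
    have f3 := dot_cauchy a (A *ᵥ (Aᵀ *ᵥ a))
    rw [dotProduct_comm, ← dot_mulVec_transpose] at f3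
    by_contra! hlt
    have hq : 0 < Aᵀ *ᵥ a ⬝ᵥ Aᵀ *ᵥ a := by nlinarith [sq_nonneg σ1]
    have f4 : (Aᵀ *ᵥ a ⬝ᵥ Aᵀ *ᵥ a) * (Aᵀ *ᵥ a ⬝ᵥ Aᵀ *ᵥ a)
        ≤ (σ1 ^ 2 * (a ⬝ᵥ a)) * (Aᵀ *ᵥ a ⬝ᵥ Aᵀ *ᵥ a) := by nlinarith
    have f5 := le_of_mul_le_mul_right f4 hq
    nlinarith
  have hsqrt : 0 < Real.sqrt 3 := by positivity
  have h13 : 1 / Real.sqrt 3 ≤ 1 := by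
    rw [div_le_one hsqrt, Real.one_le_sqrt]; norm_num
  -- Testing restricted isometry on a coordinate vector bounds `σ₁²` from below.
  have h1δ : 1 - δ ≤ σ1 ^ 2 := by
    let e : Fin n → ℝ := Pi.single ⟨0, by omega⟩ 1
    have he : e ⬝ᵥ e = 1 := by simp [e]
    have hcard : (supp e).ncard ≤ 3 * k := by
      have : supp e ⊆ {⟨0, by omega⟩} := by
        intro i hi
        by_contra hn
        exact hi (Pi.single_eq_of_ne hn 1)
      have := Set.ncard_le_ncard this (Set.toFinite _)
      rw [Set.ncard_singleton] at this
      omega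
    have := (hδ.2.2 e hcard).1
    rw [norm2_sq, norm2_sq, he] at this
    have h2 := hs e
    rw [he] at h2
    linarith
  have hspos : 0 < σ1 ^ 2 := by linarith [hδ.2.1]
  have hsε : 0 < σ1 ^ 2 + ε := by linarith
  have hlam0 : 0 ≤ lam := by
    refine le_trans ?_ hlam1.le
    rw [sub_nonneg, div_le_iff₀ hspos, mul_comm]
    exact mul_le_mul_of_nonneg_left (by linarith) (by linarith)
  obtain ⟨τ, hτ⟩ : ∃ τ, τ = σ1 ^ 2 * (1 - lam / (σ1 ^ 2 + ε)) := ⟨_, rfl⟩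
  have hτ0 : 0 ≤ τ := by
    rw [hτ]
    refine mul_nonneg hspos.le ?_
    rw [sub_nonneg, div_le_one hsε]
    linarith
  have hτlt : τ < 1 / Real.sqrt 3 - δ := by
    have h1 : (ε + σ1 ^ 2 - lam) * σ1 ^ 2 < (1 / Real.sqrt 3 - δ) * (ε + σ1 ^ 2) := by
      rw [← lt_div_iff₀ hspos]; linarith
    have h2 : τ = (ε + σ1 ^ 2 - lam) * σ1 ^ 2 / (ε + σ1 ^ 2) := by
      rw [hτ]; field_simp; ring
    rw [h2, div_lt_iff₀ (by linarith)]
    exact h1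
  obtain ⟨N, hN⟩ : ∃ N, N = Aᵀ * A + ε • (1 : Matrix (Fin n) (Fin n) ℝ) := ⟨_, rfl⟩
  have hNT : Nᵀ = N := by simp [hN, transpose_mul]
  have hNunit : IsUnit N := by
    rw [← mulVec_injective_iff_isUnit, ← coe_mulVecLin, injective_iff_map_eq_zero]
    intro v hv
    have h1 : v ⬝ᵥ N *ᵥ v = A *ᵥ v ⬝ᵥ A *ᵥ v + ε * (v ⬝ᵥ v) := by
      rw [hN, add_mulVec, smul_mulVec, one_mulVec, ← mulVec_mulVec, dotProduct_add,
        dot_mulVec_transpose, dotProduct_smul, smul_eq_mul]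
    rw [mulVecLin_apply] at hv
    rw [hv, dotProduct_zero] at h1
    refine dotProduct_self_eq_zero.mp ?_
    nlinarith [dot_self_nonneg v, dot_self_nonneg (A *ᵥ v)]
  have hdet : IsUnit N.det := (isUnit_iff_isUnit_det N).mp hNunit
  have hNN : N * N⁻¹ = 1 := mul_nonsing_inv N hdet
  have hNN' : N⁻¹ * N = 1 := nonsing_inv_mul N hdet
  obtain ⟨G, hGdef⟩ : ∃ G, G = 1 - lam • (N⁻¹ * (Aᵀ * A)) := ⟨_, rfl⟩
  have hG : Gᵀ = G := by
    have h1 : N⁻¹ * (Aᵀ * A) = 1 - ε • N⁻¹ := by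
      have : Aᵀ * A = N - ε • 1 := by rw [hN]; simp
      rw [this, Matrix.mul_sub, hNN', Matrix.mul_smul, Matrix.mul_one]
    rw [hGdef, h1]
    simp [transpose_nonsing_inv, hNT]
  have hGv : ∀ v, G *ᵥ v = v - lam • N⁻¹ *ᵥ (Aᵀ *ᵥ (A *ᵥ v)) := by
    intro v
    rw [hGdef, sub_mulVec, one_mulVec, smul_mulVec, ← mulVec_mulVec, ← mulVec_mulVec]
  have hquad : ∀ u : Fin n → ℝ, (supp u).ncard ≤ 3 * k →
      |u ⬝ᵥ G *ᵥ u| ≤ (δ + τ) * (u ⬝ᵥ u) := by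
    intro u hu
    obtain ⟨b1, b2⟩ := quad_bounds A N (σ1 ^ 2) (σm ^ 2) ε lam hN hNN (sq_nonneg _) hε0 hlam0
      hlam2 hts hs ht u
    obtain ⟨r1, r2⟩ := hδ.2.2 u hu
    rw [norm2_sq, norm2_sq] at r1 r2
    rw [← hτ] at b2
    have hu0 := mul_nonneg hτ0 (dot_self_nonneg u)
    rw [hGv, dotProduct_sub, dotProduct_smul, smul_eq_mul, abs_le]
    constructor <;> linarith
  have hsparse : ∀ p, (supp (xs p)).ncard ≤ k := by
    intro p
    cases p with
    | zero => exact hx0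
    | succ p =>
      obtain ⟨S, hSk, -, hS0, -⟩ := hiter p
      rw [← hSk]
      refine Set.ncard_le_ncard (fun i hi => ?_) (Set.toFinite _)
      by_contra hn
      exact hi (hS0 i hn)
  have hρ0 : 0 ≤ δ + τ := add_nonneg hδ.1.le hτ0
  have hstep : ∀ p, norm2 (xs (p + 1) - x) ≤ Real.sqrt 3 * (δ + τ) * norm2 (xs p - x) := by
    intro p
    obtain ⟨S, hS⟩ := hiter p
    refine step_bound G hG _ hρ0 hquad x (xs p) _ _ hx (hsparse p) ?_ S hS
    rw [hGv, ← hN, hy, ← mulVec_sub, ← neg_sub (xs p) x]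
    simp only [mulVec_neg, smul_neg]
    abel
  have hr0 : 0 ≤ Real.sqrt 3 * (δ + τ) := mul_nonneg hsqrt.le hρ0
  have hr1 : Real.sqrt 3 * (δ + τ) < 1 := by
    have : δ + τ < 1 / Real.sqrt 3 := by linarith
    rwa [lt_div_iff₀ hsqrt, mul_comm] at this
  have hgeo : ∀ p, norm2 (xs p - x) ≤ (Real.sqrt 3 * (δ + τ)) ^ p * norm2 (xs 0 - x) := by
    intro p
    induction p with
    | zero => simp
    | succ p ih =>
      refine (hstep p).trans ?_
      rw [pow_succ', mul_assoc _ (_ ^ p)]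
      exact mul_le_mul_of_nonneg_left ih hr0
  have hlim := (tendsto_pow_atTop_nhds_zero_of_lt_one hr0 hr1).mul_const (norm2 (xs 0 - x))
  rw [zero_mul] at hlim
  exact squeeze_zero (fun p => norm2_nonneg _) hgeo hlim
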